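/- Let c > 0, R > 0, and let f: ℝ³ × ℂ → ℂ be such that for every k ∈ ℝ³ ∖ {0} the map w ↦ f(k, iw) is continuous and satisfies |f(k, iw)| ≤ R on the strip {w ∈ ℂ : |Re w| ≤ c|k|}. For t ≥ 0, k ≠ 0 and v, v' ∈ ℝ³ define I(t,k,v,v') := ∫_ℝ i e^{(−c|k| + ir)t} f(k, i(−c|k| + ir)) / ((−c|k| + ir + i k·v)(−c|k| + ir + i k·v')) dr. Then this integral converges absolutely, I is infinitely differentiable in (v,v'), and for all M, N ∈ ℕ₀ there exists a constant C = C(M,N,R,c) such that |∇_v^M ∇_{v'}^N I(t,k,v,v')| ≤ C e^{−c|k|t}/|k| for all t ≥ 0, k ≠ 0 and v, v' ∈ ℝ³. -/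

import Mathlib

/-!
With `a = c|k|`, `x = k·v`, `y = k·v'`, the contour integral is
`J(x, y) = ∫ g(r) φ₀(r + x) φ₀(r + y) dr`, where `φ₀(s) = (-a + is)⁻¹` and `g` is continuous with
`|g| ≤ R e^{-at}`.  Writing `φ_m` for the `m`-th derivative of `φ₀`, one has
`|φ_m(s)| ≤ m! a^{-m} (a² + s²)^{-1/2}`, so every product `φ_m(r + x) φ_n(r + y)` is dominated,
locally uniformly in `(x, y)`, by a sum of two Lorentzians `1 / (a² + s²)`.  Differentiation under
the integral sign (`hasFDerivAt_poleIntegral`) then gives `∂ₓ^M ∂_y^N J = ∫ g φ_M φ_N`, whence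
smoothness and, since a Lorentzian has integral `π / a`, the bound
`|∂ₓ^M ∂_y^N J| ≤ R e^{-at} M! N! a^{-M-N} π / a` (`norm_poleIntegral_le`).

Each derivative in `v` or `v'` costs a factor `|k|` by the chain rule for `v ↦ k·v`
(`norm_iteratedFDeriv_iteratedFDeriv_comp_le`), which cancels the `|k|` in `a^{-M-N}` and leaves
`C = R M! N! c^{-M-N} π / c`.
-/

open MeasureTheory Filter RealInnerProductSpace

noncomputable section

local notation "E3" => EuclideanSpace ℝ (Fin 3)

/-- The contour integral `I(t,k,v,v') = ∫ i e^{(−c|k|+ir)t} f(k, i(−c|k|+ir)) /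
((−c|k|+ir+ik·v)(−c|k|+ir+ik·v')) dr`, corresponding to Laplace inversion along the
vertical line `Re z = −c|k|`. -/
def contourI (c : ℝ) (f : EuclideanSpace ℝ (Fin 3) → ℂ → ℂ)
    (t : ℝ) (k v v' : E3) : ℂ :=
  ∫ r : ℝ,
    Complex.I * Complex.exp ((((-(c * ‖k‖) : ℝ) : ℂ) + (r : ℂ) * Complex.I) * (t : ℂ)) *
        f k (Complex.I * (((-(c * ‖k‖) : ℝ) : ℂ) + (r : ℂ) * Complex.I)) /
      (((((-(c * ‖k‖) : ℝ) : ℂ) + (r : ℂ) * Complex.I) + Complex.I * ((⟪k, v⟫ : ℝ) : ℂ)) *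
        ((((-(c * ‖k‖) : ℝ) : ℂ) + (r : ℂ) * Complex.I) + Complex.I * ((⟪k, v'⟫ : ℝ) : ℂ)))

/-! ### The kernels and their decay -/

/-- The `m`-th derivative of `s ↦ (-a + i s)⁻¹`. -/
def poleDeriv (a : ℝ) (m : ℕ) (s : ℝ) : ℂ :=
  (-Complex.I) ^ m * (m.factorial : ℂ) * ((((-a : ℝ) : ℂ) + (s : ℂ) * Complex.I)⁻¹) ^ (m + 1)

/-- The Lorentzian `1 / (a² + s²)`, the squared modulus of `(-a + i s)⁻¹`. -/
def lorentz (a s : ℝ) : ℝ := (a ^ 2 + s ^ 2)⁻¹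

lemma pole_ne_zero {a : ℝ} (ha : 0 < a) (s : ℝ) :
    ((-a : ℝ) : ℂ) + (s : ℂ) * Complex.I ≠ 0 := by
  intro h
  have := congrArg Complex.re h
  simp at this
  exact ha.ne' this

lemma hasDerivAt_poleDeriv {a : ℝ} (ha : 0 < a) (m : ℕ) (s : ℝ) :
    HasDerivAt (poleDeriv a m) (poleDeriv a (m + 1) s) s := by
  have h1 : HasDerivAt (fun s : ℝ => ((-a : ℝ) : ℂ) + (s : ℂ) * Complex.I) Complex.I s := by
    simpa using ((Complex.ofRealCLM.hasDerivAt (x := s)).mul_const Complex.I).const_add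
      (((-a : ℝ) : ℂ))
  have h2 := ((h1.inv (pole_ne_zero ha s)).pow (m + 1)).const_mul
    ((-Complex.I) ^ m * (m.factorial : ℂ))
  refine h2.congr_deriv ?_
  simp only [poleDeriv, Nat.factorial_succ, Pi.inv_apply]
  generalize ((-a : ℝ) : ℂ) + (s : ℂ) * Complex.I = z
  rw [div_eq_mul_inv, ← inv_pow, Nat.add_sub_cancel]
  push_cast
  ring

lemma continuous_poleDeriv {a : ℝ} (ha : 0 < a) (m : ℕ) : Continuous (poleDeriv a m) :=
  continuous_iff_continuousAt.2 fun s => (hasDerivAt_poleDeriv ha m s).continuousAt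

lemma lorentz_nonneg (a s : ℝ) : 0 ≤ lorentz a s := by unfold lorentz; positivity

lemma norm_pole_inv_sq {a : ℝ} (s : ℝ) :
    ‖(((-a : ℝ) : ℂ) + (s : ℂ) * Complex.I)⁻¹‖ ^ 2 = lorentz a s := by
  rw [norm_inv, inv_pow, ← Complex.normSq_eq_norm_sq, Complex.normSq_add_mul_I, lorentz]
  simp

lemma norm_pole_inv_le {a : ℝ} (ha : 0 < a) (s : ℝ) :
    ‖(((-a : ℝ) : ℂ) + (s : ℂ) * Complex.I)⁻¹‖ ≤ a⁻¹ := by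
  refine le_of_sq_le_sq ?_ (by positivity)
  rw [norm_pole_inv_sq, lorentz, inv_pow]
  gcongr
  nlinarith [sq_nonneg s]

lemma norm_poleDeriv_le {a : ℝ} (ha : 0 < a) (m : ℕ) (s : ℝ) :
    ‖poleDeriv a m s‖ ≤ m.factorial * a⁻¹ ^ m *
      ‖(((-a : ℝ) : ℂ) + (s : ℂ) * Complex.I)⁻¹‖ := by
  have h := norm_pole_inv_le ha s
  unfold poleDeriv
  rw [norm_mul, norm_mul, norm_pow, norm_pow, norm_neg, Complex.norm_I, one_pow, one_mul,
    Complex.norm_natCast, pow_succ, ← mul_assoc]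
  gcongr

/-- The constant `m! n! a^{-m-n} / 2` in the bound for a product of two kernels. -/
def prodConst (a : ℝ) (m n : ℕ) : ℝ := m.factorial * n.factorial * a⁻¹ ^ (m + n) / 2

lemma prodConst_nonneg {a : ℝ} (ha : 0 < a) (m n : ℕ) : 0 ≤ prodConst a m n := by
  unfold prodConst; positivity

/-- The decay of the product comes from `2 |A| |B| ≤ |A|² + |B|²`, which separates the
shifts `s` and `u`. -/
lemma norm_poleDeriv_mul_le {a : ℝ} (ha : 0 < a) (m n : ℕ) (s u : ℝ) :
    ‖poleDeriv a m s * poleDeriv a n u‖ ≤ prodConst a m n * (lorentz a s + lorentz a u) := by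
  rw [norm_mul]
  refine (mul_le_mul (norm_poleDeriv_le ha m s) (norm_poleDeriv_le ha n u) (norm_nonneg _)
    (by positivity)).trans ?_
  rw [← norm_pole_inv_sq, ← norm_pole_inv_sq]
  set A := ‖(((-a : ℝ) : ℂ) + (s : ℂ) * Complex.I)⁻¹‖
  set B := ‖(((-a : ℝ) : ℂ) + (u : ℂ) * Complex.I)⁻¹‖
  have h : 2 * (A * B) ≤ A ^ 2 + B ^ 2 := by nlinarith [sq_nonneg (A - B)]
  calc _ = prodConst a m n * (2 * (A * B)) := by unfold prodConst; ring
    _ ≤ _ := mul_le_mul_of_nonneg_left h (prodConst_nonneg ha m n)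

/-- A Lorentzian is locally uniformly controlled by its translates. -/
lemma lorentz_le_of_abs_sub_le {a : ℝ} (ha : 0 < a) {s u : ℝ} (h : |s - u| ≤ a) :
    lorentz a s ≤ 3 * lorentz a u := by
  have h2 : (s - u) ^ 2 ≤ a ^ 2 := by
    rw [← sq_abs (s - u)]; gcongr
  unfold lorentz
  rw [← div_eq_mul_inv, inv_eq_one_div, div_le_div_iff₀ (by positivity) (by positivity)]
  nlinarith [sq_nonneg (s + (s - u)), sq_nonneg (2 * s - u)]

lemma lorentz_eq {a : ℝ} (ha : 0 < a) (s : ℝ) :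
    lorentz a s = a⁻¹ ^ 2 * (1 + (s / a) ^ 2)⁻¹ := by
  unfold lorentz
  field_simp

lemma integrable_lorentz {a : ℝ} (ha : 0 < a) (x : ℝ) :
    Integrable (fun r => lorentz a (r + x)) := by
  have h := ((integrable_inv_one_add_sq.comp_div ha.ne').const_mul (a⁻¹ ^ 2)).comp_add_right x
  simpa only [lorentz_eq ha] using h

lemma integral_lorentz {a : ℝ} (ha : 0 < a) (x : ℝ) :
    ∫ r, lorentz a (r + x) = Real.pi / a := by
  rw [integral_add_right_eq_self (fun r => lorentz a r) x]
  simp only [lorentz_eq ha]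
  rw [integral_const_mul, Measure.integral_comp_div (fun s : ℝ => (1 + s ^ 2)⁻¹) a,
    integral_univ_inv_one_add_sq, abs_of_pos ha, smul_eq_mul]
  field_simp

/-! ### The scalar integrals and their derivatives -/

/-- `J_{m,n}(x, y) = ∫ g(r) φ_m(r + x) φ_n(r + y) dr`, with `φ_m = poleDeriv a m`. -/
def poleIntegral (a : ℝ) (g : ℝ → ℂ) (m n : ℕ) (p : ℝ × ℝ) : ℂ :=
  ∫ r : ℝ, g r * (poleDeriv a m (r + p.1) * poleDeriv a n (r + p.2))

lemma norm_integrand_le {a : ℝ} (ha : 0 < a) {g : ℝ → ℂ} {B : ℝ} (hB : ∀ r, ‖g r‖ ≤ B)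
    (m n : ℕ) (x y r : ℝ) :
    ‖g r * (poleDeriv a m (r + x) * poleDeriv a n (r + y))‖ ≤
      B * prodConst a m n * (lorentz a (r + x) + lorentz a (r + y)) := by
  rw [norm_mul, mul_assoc]
  exact mul_le_mul (hB r) (norm_poleDeriv_mul_le ha m n _ _) (norm_nonneg _)
    ((norm_nonneg _).trans (hB r))

lemma continuous_integrand {a : ℝ} (ha : 0 < a) {g : ℝ → ℂ} (hg : Continuous g)
    (m n : ℕ) (x y : ℝ) :
    Continuous fun r => g r * (poleDeriv a m (r + x) * poleDeriv a n (r + y)) := by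
  have h1 := continuous_poleDeriv ha m
  have h2 := continuous_poleDeriv ha n
  fun_prop

lemma integrable_integrand {a : ℝ} (ha : 0 < a) {g : ℝ → ℂ} (hg : Continuous g) {B : ℝ}
    (hB : ∀ r, ‖g r‖ ≤ B) (m n : ℕ) (x y : ℝ) :
    Integrable fun r => g r * (poleDeriv a m (r + x) * poleDeriv a n (r + y)) :=
  (((integrable_lorentz ha x).add (integrable_lorentz ha y)).const_mul
    (B * prodConst a m n)).mono' (continuous_integrand ha hg m n x y).aestronglyMeasurable
      (Eventually.of_forall fun r => norm_integrand_le ha hB m n x y r)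

lemma norm_poleIntegral_le {a : ℝ} (ha : 0 < a) {g : ℝ → ℂ} {B : ℝ}
    (hB : ∀ r, ‖g r‖ ≤ B) (m n : ℕ) (p : ℝ × ℝ) :
    ‖poleIntegral a g m n p‖ ≤ B * (m.factorial * n.factorial * a⁻¹ ^ (m + n)) * (Real.pi / a) := by
  have h := norm_integral_le_of_norm_le
    (((integrable_lorentz ha p.1).add (integrable_lorentz ha p.2)).const_mul
      (B * prodConst a m n))
    (Eventually.of_forall fun r => norm_integrand_le ha hB m n p.1 p.2 r)
  refine h.trans_eq ?_
  simp only [Pi.add_apply]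
  rw [integral_const_mul, integral_add (integrable_lorentz ha p.1) (integrable_lorentz ha p.2),
    integral_lorentz ha, integral_lorentz ha, prodConst]
  ring

/-- The first coordinate of `ℝ × ℝ`, as a complex-valued real-linear form. -/
def dX : ℝ × ℝ →L[ℝ] ℂ := Complex.ofRealCLM.comp (ContinuousLinearMap.fst ℝ ℝ ℝ)

/-- The second coordinate of `ℝ × ℝ`, as a complex-valued real-linear form. -/
def dY : ℝ × ℝ →L[ℝ] ℂ := Complex.ofRealCLM.comp (ContinuousLinearMap.snd ℝ ℝ ℝ)

lemma hasFDerivAt_integrand {a : ℝ} (ha : 0 < a) (g : ℝ → ℂ) (m n : ℕ) (r : ℝ) (p : ℝ × ℝ) :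
    HasFDerivAt (fun p : ℝ × ℝ => g r * (poleDeriv a m (r + p.1) * poleDeriv a n (r + p.2)))
      ((g r * (poleDeriv a (m + 1) (r + p.1) * poleDeriv a n (r + p.2))) • dX +
        (g r * (poleDeriv a m (r + p.1) * poleDeriv a (n + 1) (r + p.2))) • dY) p := by
  have h1 := (hasDerivAt_poleDeriv ha m (r + p.1)).hasFDerivAt.comp p
    ((hasFDerivAt_fst (𝕜 := ℝ) (p := p)).const_add r)
  have h2 := (hasDerivAt_poleDeriv ha n (r + p.2)).hasFDerivAt.comp p
    ((hasFDerivAt_snd (𝕜 := ℝ) (p := p)).const_add r)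
  refine ((h1.mul h2).const_mul (g r)).congr_fderiv ?_
  ext <;> simp [dX, dY, -mul_eq_mul_left_iff] <;> ring

lemma hasFDerivAt_poleIntegral {a : ℝ} (ha : 0 < a) {g : ℝ → ℂ} (hg : Continuous g) {B : ℝ}
    (hB : ∀ r, ‖g r‖ ≤ B) (m n : ℕ) (p : ℝ × ℝ) :
    HasFDerivAt (poleIntegral a g m n)
      (poleIntegral a g (m + 1) n p • dX + poleIntegral a g m (n + 1) p • dY) p := by
  have hB0 : 0 ≤ B := (norm_nonneg _).trans (hB 0)
  have i1 := integrable_integrand ha hg hB (m + 1) n p.1 p.2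
  have i2 := integrable_integrand ha hg hB m (n + 1) p.1 p.2
  have key := hasFDerivAt_integral_of_dominated_of_fderiv_le (μ := volume) (𝕜 := ℝ)
    (F := fun (p : ℝ × ℝ) r => g r * (poleDeriv a m (r + p.1) * poleDeriv a n (r + p.2)))
    (F' := fun (p : ℝ × ℝ) r =>
      (g r * (poleDeriv a (m + 1) (r + p.1) * poleDeriv a n (r + p.2))) • dX +
        (g r * (poleDeriv a m (r + p.1) * poleDeriv a (n + 1) (r + p.2))) • dY)
    (x₀ := p) (s := Metric.ball p a)
    (bound := fun r => (B * prodConst a (m + 1) n * 3 * ‖dX‖ + B * prodConst a m (n + 1) * 3 * ‖dY‖)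
      * (lorentz a (r + p.1) + lorentz a (r + p.2)))
    (Metric.ball_mem_nhds p ha)
    (Eventually.of_forall fun q => (continuous_integrand ha hg m n q.1 q.2).aestronglyMeasurable)
    (integrable_integrand ha hg hB m n p.1 p.2)
    ((i1.smul_const dX).add (i2.smul_const dY)).aestronglyMeasurable
    (Eventually.of_forall fun r q hq => ?_)
    (((integrable_lorentz ha p.1).add (integrable_lorentz ha p.2)).const_mul _)
    (Eventually.of_forall fun r q _ => hasFDerivAt_integrand ha g m n r q)
  · refine key.congr_fderiv ?_
    rw [integral_add (i1.smul_const dX) (i2.smul_const dY), integral_smul_const,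
      integral_smul_const]
    rfl
  · rw [Metric.mem_ball, Prod.dist_eq, max_lt_iff, Real.dist_eq, Real.dist_eq] at hq
    have l1 : lorentz a (r + q.1) ≤ 3 * lorentz a (r + p.1) :=
      lorentz_le_of_abs_sub_le ha (by simpa using hq.1.le)
    have l2 : lorentz a (r + q.2) ≤ 3 * lorentz a (r + p.2) :=
      lorentz_le_of_abs_sub_le ha (by simpa using hq.2.le)
    have hb : ∀ m n, ‖g r * (poleDeriv a m (r + q.1) * poleDeriv a n (r + q.2))‖ ≤
        B * prodConst a m n * (3 * (lorentz a (r + p.1) + lorentz a (r + p.2))) := by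
      intro m n
      refine (norm_integrand_le ha hB m n q.1 q.2 r).trans ?_
      have := prodConst_nonneg ha m n
      gcongr
      linarith
    refine (norm_add_le _ _).trans ?_
    rw [norm_smul, norm_smul]
    refine (add_le_add (mul_le_mul_of_nonneg_right (hb (m + 1) n) (norm_nonneg dX))
      (mul_le_mul_of_nonneg_right (hb m (n + 1)) (norm_nonneg dY))).trans_eq ?_
    ring

lemma contDiff_poleIntegral {a : ℝ} (ha : 0 < a) {g : ℝ → ℂ} (hg : Continuous g) {B : ℝ}
    (hB : ∀ r, ‖g r‖ ≤ B) (m n : ℕ) : ContDiff ℝ (⊤ : ℕ∞) (poleIntegral a g m n) := by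
  refine contDiff_infty.2 fun j => ?_
  induction j generalizing m n with
  | zero =>
    exact contDiff_zero.2 (continuous_iff_continuousAt.2 fun p =>
      (hasFDerivAt_poleIntegral ha hg hB m n p).continuousAt)
  | succ j ih =>
    push_cast
    exact contDiff_succ_iff_hasFDerivAt.2 ⟨_,
      ((ih (m + 1) n).smul contDiff_const).add ((ih m (n + 1)).smul contDiff_const),
      hasFDerivAt_poleIntegral ha hg hB m n⟩

lemma iteratedDeriv_poleIntegral_snd {a : ℝ} (ha : 0 < a) {g : ℝ → ℂ} (hg : Continuous g) {B : ℝ}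
    (hB : ∀ r, ‖g r‖ ≤ B) (m n : ℕ) (x : ℝ) :
    iteratedDeriv n (fun y => poleIntegral a g m 0 (x, y)) =
      fun y => poleIntegral a g m n (x, y) := by
  induction n with
  | zero => simp
  | succ n ih =>
    rw [iteratedDeriv_succ, ih]
    ext y
    have h := (hasFDerivAt_poleIntegral ha hg hB m n (x, y)).comp_hasDerivAt y
      ((hasDerivAt_const y x).prodMk (hasDerivAt_id y))
    simpa [dX, dY] using! h.deriv

lemma iteratedDeriv_poleIntegral_fst {a : ℝ} (ha : 0 < a) {g : ℝ → ℂ} (hg : Continuous g) {B : ℝ}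
    (hB : ∀ r, ‖g r‖ ≤ B) (m n : ℕ) (y : ℝ) :
    iteratedDeriv m (fun x => poleIntegral a g 0 n (x, y)) =
      fun x => poleIntegral a g m n (x, y) := by
  induction m with
  | zero => simp
  | succ m ih =>
    rw [iteratedDeriv_succ, ih]
    ext x
    have h := (hasFDerivAt_poleIntegral ha hg hB m n (x, y)).comp_hasDerivAt x
      ((hasDerivAt_id x).prodMk (hasDerivAt_const x y))
    simpa [dX, dY] using! h.deriv

/-! ### The chain rule along a linear form -/

/-- The map `z ↦ ((w₁, …, w_N) ↦ L w₁ ⋯ L w_N · z)`, through which the `N`-th derivative of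
`h ∘ L` depends on the scalar `N`-th derivative of `h`. -/
def powForm {E : Type*} [NormedAddCommGroup E] [NormedSpace ℝ E] (L : E →L[ℝ] ℝ) (N : ℕ) :
    ℂ →L[ℝ] ContinuousMultilinearMap ℝ (fun _ : Fin N => E) ℂ :=
  (ContinuousMultilinearMap.compContinuousLinearMapL (fun _ : Fin N => L)).comp
    (ContinuousMultilinearMap.piFieldEquiv ℝ (Fin N) ℂ).toContinuousLinearEquiv.toContinuousLinearMap

section

variable {E : Type*} [NormedAddCommGroup E] [NormedSpace ℝ E]

lemma norm_powForm_le (L : E →L[ℝ] ℝ) (N : ℕ) : ‖powForm L N‖ ≤ ‖L‖ ^ N := by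
  refine ContinuousLinearMap.opNorm_le_bound _ (by positivity) fun z => ?_
  refine (ContinuousMultilinearMap.norm_compContinuousLinearMap_le
    (ContinuousMultilinearMap.piFieldEquiv ℝ (Fin N) ℂ z) (fun _ : Fin N => L)).trans_eq ?_
  rw [LinearIsometryEquiv.norm_map]
  simp [mul_comm]

lemma iteratedFDeriv_comp_form (L : E →L[ℝ] ℝ) {h : ℝ → ℂ} (hh : ContDiff ℝ (⊤ : ℕ∞) h) (N : ℕ)
    (v : E) : iteratedFDeriv ℝ N (fun w => h (L w)) v = powForm L N (iteratedDeriv N h (L v)) := by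
  have h1 := L.iteratedFDeriv_comp_right hh v (i := N) (mod_cast le_top)
  rw [iteratedFDeriv_eq_equiv_comp] at h1
  exact h1

lemma norm_iteratedFDeriv_iteratedFDeriv_comp_le {a : ℝ} (ha : 0 < a) {g : ℝ → ℂ}
    (hg : Continuous g) {B : ℝ} (hB : ∀ r, ‖g r‖ ≤ B) (L : E →L[ℝ] ℝ) (M N : ℕ) (v v' : E) :
    ‖iteratedFDeriv ℝ M (fun w => iteratedFDeriv ℝ N
        (fun w' => poleIntegral a g 0 0 (L w, L w')) v') v‖ ≤
      ‖L‖ ^ N * (‖L‖ ^ M * ‖poleIntegral a g M N (L v, L v')‖) := by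
  have e1 : (fun w => iteratedFDeriv ℝ N (fun w' => poleIntegral a g 0 0 (L w, L w')) v') =
      powForm L N ∘ fun w => poleIntegral a g 0 N (L w, L v') := by
    ext1 w
    rw [iteratedFDeriv_comp_form L (h := fun y => poleIntegral a g 0 0 (L w, y))
      ((contDiff_poleIntegral ha hg hB 0 0).comp (contDiff_const.prodMk contDiff_id)),
      iteratedDeriv_poleIntegral_snd ha hg hB]
    rfl
  have hx : ContDiff ℝ (⊤ : ℕ∞) fun x : ℝ => poleIntegral a g 0 N (x, L v') :=
    (contDiff_poleIntegral ha hg hB 0 N).comp (contDiff_id.prodMk contDiff_const)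
  rw [e1]
  refine ((powForm L N).norm_iteratedFDeriv_comp_left
    (hx.comp L.contDiff).contDiffAt (n := M) (mod_cast le_top)).trans ?_
  refine mul_le_mul (norm_powForm_le L N) ?_ (norm_nonneg _) (by positivity)
  rw [show ((fun x : ℝ => poleIntegral a g 0 N (x, L v')) ∘ L) =
      fun w => (fun x : ℝ => poleIntegral a g 0 N (x, L v')) (L w) from rfl,
    iteratedFDeriv_comp_form L hx, iteratedDeriv_poleIntegral_fst ha hg hB]
  refine ((powForm L M).le_opNorm _).trans ?_
  gcongr
  exact norm_powForm_le L M

end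

/-! ### The contour integral -/

/-- The factor of the integrand independent of the velocities. -/
def numer (c : ℝ) (f : E3 → ℂ → ℂ) (t : ℝ) (k : E3) (r : ℝ) : ℂ :=
  Complex.I * Complex.exp ((((-(c * ‖k‖) : ℝ) : ℂ) + (r : ℂ) * Complex.I) * (t : ℂ)) *
    f k (Complex.I * (((-(c * ‖k‖) : ℝ) : ℂ) + (r : ℂ) * Complex.I))

lemma integrand_eq (c : ℝ) (f : E3 → ℂ → ℂ) (t : ℝ) (k v v' : E3) (r : ℝ) :
    Complex.I * Complex.exp ((((-(c * ‖k‖) : ℝ) : ℂ) + (r : ℂ) * Complex.I) * (t : ℂ)) *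
        f k (Complex.I * (((-(c * ‖k‖) : ℝ) : ℂ) + (r : ℂ) * Complex.I)) /
      (((((-(c * ‖k‖) : ℝ) : ℂ) + (r : ℂ) * Complex.I) + Complex.I * ((⟪k, v⟫ : ℝ) : ℂ)) *
        ((((-(c * ‖k‖) : ℝ) : ℂ) + (r : ℂ) * Complex.I) + Complex.I * ((⟪k, v'⟫ : ℝ) : ℂ))) =
      numer c f t k r * (poleDeriv (c * ‖k‖) 0 (r + innerSL ℝ k v) *
        poleDeriv (c * ‖k‖) 0 (r + innerSL ℝ k v')) := by
  have e : ∀ u : E3, (((-(c * ‖k‖) : ℝ) : ℂ) + (r : ℂ) * Complex.I) +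
      Complex.I * ((⟪k, u⟫ : ℝ) : ℂ) =
      ((-(c * ‖k‖) : ℝ) : ℂ) + ((r + innerSL ℝ k u : ℝ) : ℂ) * Complex.I := by
    intro u
    rw [innerSL_apply_apply]
    push_cast
    ring
  rw [e v, e v', numer, div_eq_mul_inv, mul_inv]
  simp [poleDeriv]

lemma contourI_eq (c : ℝ) (f : E3 → ℂ → ℂ) (t : ℝ) (k v v' : E3) :
    contourI c f t k v v' = poleIntegral (c * ‖k‖) (numer c f t k) 0 0
      (innerSL ℝ k v, innerSL ℝ k v') := by
  unfold contourI poleIntegral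
  exact integral_congr_ae (Eventually.of_forall fun r => integrand_eq c f t k v v' r)

lemma abs_re_contour {c : ℝ} (hc : 0 < c) (k : E3) (r : ℝ) :
    |(((-(c * ‖k‖) : ℝ) : ℂ) + (r : ℂ) * Complex.I).re| ≤ c * ‖k‖ := by
  have : (((-(c * ‖k‖) : ℝ) : ℂ) + (r : ℂ) * Complex.I).re = -(c * ‖k‖) := by simp
  rw [this, abs_neg, abs_of_nonneg (by positivity)]

lemma continuous_numer {c : ℝ} (hc : 0 < c) {f : E3 → ℂ → ℂ} (t : ℝ) {k : E3}
    (hf : ContinuousOn (fun w : ℂ => f k (Complex.I * w)) {w : ℂ | |w.re| ≤ c * ‖k‖}) :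
    Continuous (numer c f t k) := by
  have h : Continuous fun r : ℝ => f k (Complex.I * (((-(c * ‖k‖) : ℝ) : ℂ) + (r : ℂ) * Complex.I)) :=
    hf.comp_continuous (f := fun r : ℝ => ((-(c * ‖k‖) : ℝ) : ℂ) + (r : ℂ) * Complex.I)
      (by fun_prop) (abs_re_contour hc k)
  exact Continuous.mul (by fun_prop) h

lemma norm_numer_le {c R : ℝ} (hc : 0 < c) {f : E3 → ℂ → ℂ} (t : ℝ) {k : E3}
    (hf : ∀ w : ℂ, |w.re| ≤ c * ‖k‖ → ‖f k (Complex.I * w)‖ ≤ R) (r : ℝ) :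
    ‖numer c f t k r‖ ≤ R * Real.exp (-(c * ‖k‖ * t)) := by
  unfold numer
  rw [norm_mul, norm_mul, Complex.norm_I, one_mul, Complex.norm_exp, mul_comm]
  have : ((((-(c * ‖k‖) : ℝ) : ℂ) + (r : ℂ) * Complex.I) * (t : ℂ)).re = -(c * ‖k‖ * t) := by
    simp
  rw [this]
  gcongr
  exact hf _ (abs_re_contour hc k r)

/-- Let `c, R > 0` and let `f(k,·)` be continuous and bounded by `R` on the
strip `{|Re w| ≤ c|k|}` (composed with `w ↦ iw`).  Then the contour integral `I(t,k,v,v')`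
converges absolutely, is smooth in `(v,v')`, and for all `M, N` there is `C = C(M,N,R,c)` with
`|∇_v^M ∇_{v'}^N I(t,k,v,v')| ≤ C e^{−c|k|t}/|k|`. -/
theorem statement7 (c R : ℝ) (hc : 0 < c) (hR : 0 < R) (M N : ℕ) :
    ∃ C : ℝ, ∀ f : EuclideanSpace ℝ (Fin 3) → ℂ → ℂ,
      (∀ k : E3, k ≠ 0 →
        ContinuousOn (fun w : ℂ => f k (Complex.I * w)) {w : ℂ | |w.re| ≤ c * ‖k‖} ∧
        ∀ w : ℂ, |w.re| ≤ c * ‖k‖ → ‖f k (Complex.I * w)‖ ≤ R) →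
      ∀ t : ℝ, 0 ≤ t → ∀ k : E3, k ≠ 0 →
        (∀ v v' : E3, Integrable (fun r : ℝ =>
          Complex.I * Complex.exp ((((-(c * ‖k‖) : ℝ) : ℂ) + (r : ℂ) * Complex.I) * (t : ℂ)) *
              f k (Complex.I * (((-(c * ‖k‖) : ℝ) : ℂ) + (r : ℂ) * Complex.I)) /
            (((((-(c * ‖k‖) : ℝ) : ℂ) + (r : ℂ) * Complex.I) +
                Complex.I * ((⟪k, v⟫ : ℝ) : ℂ)) *
              ((((-(c * ‖k‖) : ℝ) : ℂ) + (r : ℂ) * Complex.I) +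
                Complex.I * ((⟪k, v'⟫ : ℝ) : ℂ))))) ∧
        ContDiff ℝ (⊤ : ℕ∞) (fun p : E3 × E3 => contourI c f t k p.1 p.2) ∧
        (∀ v v' : E3,
          ‖iteratedFDeriv ℝ M
              (fun w : E3 =>
                iteratedFDeriv ℝ N (fun w' : E3 => contourI c f t k w w') v') v‖ ≤
            C * Real.exp (-(c * ‖k‖ * t)) / ‖k‖) := by
  refine ⟨R * (M.factorial * N.factorial * c⁻¹ ^ (M + N)) * (Real.pi / c), ?_⟩
  intro f hf t _ k hk
  obtain ⟨hcont, hbd⟩ := hf k hk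
  have hk0 : 0 < ‖k‖ := norm_pos_iff.2 hk
  have ha : 0 < c * ‖k‖ := mul_pos hc hk0
  have hg := continuous_numer hc t hcont
  have hB := norm_numer_le hc t hbd
  refine ⟨fun v v' => ?_, ?_, fun v v' => ?_⟩
  · simp only [integrand_eq]
    exact integrable_integrand ha hg hB 0 0 _ _
  · simp only [contourI_eq]
    exact (contDiff_poleIntegral ha hg hB 0 0).comp
      (((innerSL ℝ k).contDiff.comp contDiff_fst).prodMk
        ((innerSL ℝ k).contDiff.comp contDiff_snd))
  · simp only [contourI_eq]
    refine (norm_iteratedFDeriv_iteratedFDeriv_comp_le ha hg hB (innerSL ℝ k) M N v v').trans ?_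
    rw [innerSL_apply_norm]
    refine (mul_le_mul_of_nonneg_left (mul_le_mul_of_nonneg_left
      (norm_poleIntegral_le ha hB M N _) (by positivity)) (by positivity)).trans_eq ?_
    rw [mul_inv, mul_pow, pow_add ‖k‖⁻¹, inv_pow ‖k‖, inv_pow ‖k‖]
    field_simp
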